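/- arXiv:1503.07129 — 7 statements merged into one kernel-verified Lean document; each statement's English description precedes it below -/
import Mathlib

section
/- Let m ∈ ℕ, m ≥ 1, and let λ ∈ ℝ satisfy (m−1)/m < λ ≤ m/(m+1). Then the set of fixed points of f_λ is exactly {0, −1, −2, …, −m}; that is, for every x ∈ ℝ, ⌊λx⌋ = x if and only if x is an integer with −m ≤ x ≤ 0. -/
/-!
A fixed point of `x ↦ ⌊λ x⌋` is an integer `k` with `0 ≤ (λ - 1) k < 1`. For `λ < 1` this reads
`-(1 - λ)⁻¹ < k ≤ 0`, so the fixed points depend on `λ` only through `⌈(1 - λ)⁻¹⌉`, and the interval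
`((m - 1) / m, m / (m + 1)]` consists of the `λ < 1` for which this ceiling is `m + 1`.
-/

section Ring

variable {R : Type*} [Ring R] [LinearOrder R] [FloorRing R]

theorem intCast_floor_eq_iff {a x : R} :
    (⌊a⌋ : R) = x ↔ ∃ k : ℤ, x = k ∧ (k : R) ≤ a ∧ a < k + 1 := by
  constructor
  · rintro rfl
    exact ⟨⌊a⌋, rfl, Int.floor_le a, Int.lt_floor_add_one a⟩
  · rintro ⟨k, rfl, hk⟩
    rw [Int.floor_eq_iff.mpr hk]

theorem intCast_floor_mul_eq_self_iff [IsOrderedAddMonoid R] {lam x : R} :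
    (⌊lam * x⌋ : R) = x ↔ ∃ k : ℤ, x = k ∧ 0 ≤ (lam - 1) * k ∧ (lam - 1) * k < 1 := by
  rw [intCast_floor_eq_iff]
  refine exists_congr fun k => and_congr_right ?_
  rintro rfl
  rw [sub_one_mul, sub_nonneg, sub_lt_iff_lt_add']

end Ring

section Field

variable {K : Type*} [Field K] [LinearOrder K] [IsStrictOrderedRing K]

theorem sub_one_div_lt_iff_lt_inv_one_sub {a lam : K} (ha : 0 < a) (hlam : lam < 1) :
    (a - 1) / a < lam ↔ a < (1 - lam)⁻¹ := by
  rw [lt_inv_comm₀ ha (sub_pos.mpr hlam), sub_div, div_self ha.ne', one_div, sub_lt_comm]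

variable [FloorRing K]

theorem ceil_inv_one_sub_eq_natCast_add_one_iff {m : ℕ} {lam : K} (hm : 0 < m) (hlam : lam < 1) :
    ⌈(1 - lam)⁻¹⌉ = (m : ℤ) + 1 ↔ ((m : K) - 1) / m < lam ∧ lam ≤ (m : K) / (m + 1) := by
  have lower : ((m : K) - 1) / m < lam ↔ (m : K) < (1 - lam)⁻¹ :=
    sub_one_div_lt_iff_lt_inv_one_sub (Nat.cast_pos.mpr hm) hlam
  have upper : lam ≤ (m : K) / (m + 1) ↔ (1 - lam)⁻¹ ≤ (m : K) + 1 := by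
    simpa only [add_sub_cancel_right, not_lt] using
      (sub_one_div_lt_iff_lt_inv_one_sub (Nat.cast_add_one_pos m) hlam).not
  rw [Int.ceil_eq_iff, lower, upper]
  push_cast
  rw [add_sub_cancel_right]

theorem intCast_floor_mul_eq_self_iff_of_lt_one {lam x : K} (hlam : lam < 1) :
    (⌊lam * x⌋ : K) = x ↔ ∃ k : ℤ, x = k ∧ -⌈(1 - lam)⁻¹⌉ < k ∧ k ≤ 0 := by
  have hpos : 0 < 1 - lam := sub_pos.mpr hlam
  have nonpos_iff (k : ℤ) : 0 ≤ (lam - 1) * k ↔ k ≤ 0 := by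
    rw [← neg_sub, neg_mul_comm, mul_nonneg_iff_of_pos_left hpos, neg_nonneg, Int.cast_nonpos]
  have lt_iff (k : ℤ) : (lam - 1) * k < 1 ↔ -⌈(1 - lam)⁻¹⌉ < k := by
    rw [neg_lt, Int.lt_ceil, inv_eq_one_div, lt_div_iff₀' hpos, Int.cast_neg, mul_neg, ← neg_mul,
      neg_sub]
  simp only [intCast_floor_mul_eq_self_iff, nonpos_iff, lt_iff, and_comm]

theorem floor_lambda_fixed_points_lt_one_general (m : ℕ) (hm : 1 ≤ m) (lam : K)
    (h1 : ((m : K) - 1) / m < lam) (h2 : lam ≤ (m : K) / (m + 1)) :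
    ∀ x : K, (⌊lam * x⌋ : K) = x ↔ ∃ k : ℤ, x = (k : K) ∧ -(m : ℤ) ≤ k ∧ k ≤ 0 := by
  have hlam : lam < 1 :=
    h2.trans_lt ((div_lt_one (Nat.cast_add_one_pos m)).mpr (lt_add_one (m : K)))
  have hceil : ⌈(1 - lam)⁻¹⌉ = (m : ℤ) + 1 :=
    (ceil_inv_one_sub_eq_natCast_add_one_iff hm hlam).mpr ⟨h1, h2⟩
  have neg_ceil_lt_iff (k : ℤ) : -((m : ℤ) + 1) < k ↔ -(m : ℤ) ≤ k := by lia
  intro x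
  simp only [intCast_floor_mul_eq_self_iff_of_lt_one hlam, hceil, neg_ceil_lt_iff]

end Field

/-- For (m-1)/m < λ ≤ m/(m+1), the fixed points of f_λ(x) = ⌊λx⌋ are exactly
the integers 0, -1, ..., -m. -/
theorem floor_lambda_fixed_points_lt_one (m : ℕ) (hm : 1 ≤ m) (lam : ℝ)
    (h1 : ((m : ℝ) - 1) / m < lam) (h2 : lam ≤ (m : ℝ) / (m + 1)) :
    ∀ x : ℝ, (⌊lam * x⌋ : ℝ) = x ↔ ∃ k : ℤ, x = (k : ℝ) ∧ -(m : ℤ) ≤ k ∧ k ≤ 0 :=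
  floor_lambda_fixed_points_lt_one_general m hm lam h1 h2
end

section
/- Let m ∈ ℕ, m ≥ 2, and let λ ∈ ℝ satisfy (m+1)/m ≤ λ < m/(m−1). Then the set of fixed points of f_λ is exactly {0, 1, 2, …, m−1}; that is, for every x ∈ ℝ, ⌊λx⌋ = x if and only if x is an integer with 0 ≤ x ≤ m−1. -/
/-!
A fixed point of `x ↦ ⌊a * x⌋` is an integer `k` with `k ≤ a * k < k + 1`, that is,
`0 ≤ (a - 1) * k < 1`. For `1 < a` these are the integers `0 ≤ k < (a - 1)⁻¹`, and there are
`⌈(a - 1)⁻¹⌉` of them. That number is `m` exactly when `m - 1 < (a - 1)⁻¹ ≤ m`, which for `1 < m`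
rearranges to `(m + 1) / m ≤ a < m / (m - 1)`.
-/

theorem floor_mul_intCast_eq_self_iff {R : Type*} [Ring R] [LinearOrder R] [IsOrderedAddMonoid R]
    [FloorRing R] {a : R} {k : ℤ} : ⌊a * k⌋ = k ↔ 0 ≤ (a - 1) * k ∧ (a - 1) * k < 1 := by
  rw [Int.floor_eq_iff, sub_one_mul, sub_nonneg, sub_lt_iff_lt_add']

section Field

variable {K : Type*} [Field K] [LinearOrder K] [IsStrictOrderedRing K] [FloorRing K] {a : K}

theorem floor_mul_intCast_eq_self_iff_lt_ceil (ha : 1 < a) {k : ℤ} :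
    ⌊a * k⌋ = k ↔ 0 ≤ k ∧ k < ⌈(a - 1)⁻¹⌉ := by
  have ha' : 0 < a - 1 := sub_pos.2 ha
  rw [floor_mul_intCast_eq_self_iff, mul_nonneg_iff_of_pos_left ha', Int.cast_nonneg_iff,
    ← lt_div_iff₀' ha', one_div, Int.lt_ceil]

theorem ceil_inv_sub_one_eq_iff (ha : 1 < a) {m : ℤ} (hm : 1 < m) :
    ⌈(a - 1)⁻¹⌉ = m ↔ ((m : K) + 1) / m ≤ a ∧ a < (m : K) / (m - 1) := by
  have ha' : 0 < a - 1 := sub_pos.2 ha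
  have hm_pos : (0 : K) < m := by exact_mod_cast one_pos.trans hm
  have hm_sub_pos : (0 : K) < m - 1 := sub_pos.2 (by exact_mod_cast hm)
  have lower : (a - 1)⁻¹ ≤ m ↔ ((m : K) + 1) / m ≤ a := by
    rw [inv_le_comm₀ ha' hm_pos, le_sub_iff_add_le', add_div, div_self hm_pos.ne', one_div]
  have upper : (m : K) - 1 < (a - 1)⁻¹ ↔ a < (m : K) / (m - 1) := by
    rw [lt_inv_comm₀ hm_sub_pos ha', sub_lt_iff_lt_add, ← one_div,
      div_add_one hm_sub_pos.ne', add_sub_cancel]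
  rw [Int.ceil_eq_iff, lower, upper, and_comm]

theorem floor_lambda_fixed_points_gt_one_general (ha : 1 < a) (x : K) :
    (⌊a * x⌋ : K) = x ↔ ∃ k : ℤ, x = k ∧ 0 ≤ k ∧ k < ⌈(a - 1)⁻¹⌉ := by
  simp only [← floor_mul_intCast_eq_self_iff_lt_ceil ha]
  constructor
  · intro hx
    exact ⟨⌊a * x⌋, hx.symm, by rw [hx]⟩
  · rintro ⟨k, rfl, hk⟩
    rw [hk]

end Field

/-- For m ≥ 2 and (m+1)/m ≤ λ < m/(m-1), the fixed points of f_λ(x) = ⌊λx⌋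
are exactly the integers 0, 1, ..., m-1. -/
theorem floor_lambda_fixed_points_gt_one (m : ℕ) (hm : 2 ≤ m) (lam : ℝ)
    (h1 : ((m : ℝ) + 1) / m ≤ lam) (h2 : lam < (m : ℝ) / ((m : ℝ) - 1)) :
    ∀ x : ℝ, (⌊lam * x⌋ : ℝ) = x ↔ ∃ k : ℤ, x = (k : ℝ) ∧ 0 ≤ k ∧ k ≤ (m : ℤ) - 1 := by
  have one_lt_lam : 1 < lam :=
    ((one_lt_div (by positivity)).2 (lt_add_one (m : ℝ))).trans_le h1
  have ceil_eq : ⌈(lam - 1)⁻¹⌉ = (m : ℤ) :=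
    (ceil_inv_sub_one_eq_iff one_lt_lam (by exact_mod_cast hm)).2 ⟨h1, h2⟩
  simpa only [ceil_eq, Int.le_sub_one_iff] using
    floor_lambda_fixed_points_gt_one_general one_lt_lam
end

section
/- Let λ ∈ ℝ with −1 < λ < 0. Then for every x ∈ ℝ, the sequence of iterates f_λⁿ(x) converges to 0 as n → ∞. -/
open Filter

/-!
After one step the orbit consists of integers. For `-1 < lam ≤ 0`, the map `m ↦ ⌊lam * m⌋` sends
`m ≥ 0` into `[-m, 0]` and `m < 0` into `[0, -m)`. So `|m|` never increases, and it can stay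
constant at a nonzero `m` only when passing from `m` to `-m` with `m > 0`. Shifting the absolute
value to `|3 * m + 1|`, which favours negative integers, makes the decrease strict at every
`m ≠ 0`; hence the orbit reaches the fixed point `0` after finitely many steps.
-/

theorem tendsto_iterate_pure_of_forall_lt {α β : Type*} [Preorder β] [WellFoundedLT β]
    {f : α → α} {z : α} (rank : α → β) (hz : f z = z) (hrank : ∀ a, a ≠ z → rank (f a) < rank a)
    (a : α) :
    Tendsto (fun n : ℕ => f^[n] a) atTop (pure z) := by
  induction a using (InvImage.wf rank wellFounded_lt).induction with
  | h a ih =>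
    by_cases ha : a = z
    · simp only [ha, Function.iterate_fixed hz, tendsto_const_pure]
    · exact (tendsto_add_atTop_iff_nat 1).mp (ih (f a) (hrank a ha))

section FloorMul

variable {R : Type*} [Ring R] [LinearOrder R] [FloorRing R]

theorem iterate_succ_floor_mul (lam x : R) (n : ℕ) :
    (fun y : R => (⌊lam * y⌋ : R))^[n + 1] x = ((fun k : ℤ => ⌊lam * k⌋)^[n] ⌊lam * x⌋ : ℤ) := by
  have cast_semiconj : Function.Semiconj (Int.cast : ℤ → R)
      (fun k : ℤ => ⌊lam * k⌋) (fun y : R => (⌊lam * y⌋ : R)) := fun _ => rfl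
  exact (cast_semiconj.iterate_right n ⌊lam * x⌋).symm

variable [IsStrictOrderedRing R] {lam : R}

theorem floor_mul_intCast_mem_Icc_of_nonneg (h1 : -1 ≤ lam) (h2 : lam ≤ 0) {m : ℤ} (hm : 0 ≤ m) :
    ⌊lam * m⌋ ∈ Set.Icc (-m) 0 := by
  have hm' : (0 : R) ≤ m := Int.cast_nonneg hm
  constructor
  · rw [Int.le_floor, Int.cast_neg, ← neg_one_mul]
    exact mul_le_mul_of_nonneg_right h1 hm'
  · exact Int.floor_nonpos (mul_nonpos_of_nonpos_of_nonneg h2 hm')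

theorem floor_mul_intCast_mem_Ico_of_neg (h1 : -1 < lam) (h2 : lam ≤ 0) {m : ℤ} (hm : m < 0) :
    ⌊lam * m⌋ ∈ Set.Ico 0 (-m) := by
  have hm' : (m : R) < 0 := Int.cast_lt_zero.mpr hm
  constructor
  · exact Int.floor_nonneg.mpr (mul_nonneg_of_nonpos_of_nonpos h2 hm'.le)
  · rw [Int.floor_lt, Int.cast_neg, ← neg_one_mul]
    exact mul_lt_mul_of_neg_right h1 hm'

theorem natAbs_three_mul_floor_mul_add_one_lt (h1 : -1 < lam) (h2 : lam ≤ 0) {m : ℤ}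
    (hm : m ≠ 0) : (3 * ⌊lam * m⌋ + 1).natAbs < (3 * m + 1).natAbs := by
  rcases lt_or_ge m 0 with hneg | hnonneg
  · obtain ⟨hlower, hupper⟩ := floor_mul_intCast_mem_Ico_of_neg h1 h2 hneg
    omega
  · obtain ⟨hlower, hupper⟩ := floor_mul_intCast_mem_Icc_of_nonneg h1.le h2 hnonneg
    omega

theorem tendsto_iterate_floor_mul_intCast (h1 : -1 < lam) (h2 : lam ≤ 0) (m : ℤ) :
    Tendsto (fun n : ℕ => (fun k : ℤ => ⌊lam * k⌋)^[n] m) atTop (pure 0) :=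
  tendsto_iterate_pure_of_forall_lt (fun k : ℤ => (3 * k + 1).natAbs) (by simp)
    (fun _ hk => natAbs_three_mul_floor_mul_add_one_lt h1 h2 hk) m

theorem floor_lambda_iterates_tendsto_zero_general (h1 : -1 < lam) (h2 : lam ≤ 0) (x : R) :
    Tendsto (fun n : ℕ => (fun y : R => (⌊lam * y⌋ : R))^[n] x) atTop (pure 0) := by
  rw [← tendsto_add_atTop_iff_nat 1]
  simp only [iterate_succ_floor_mul]
  rw [← Int.cast_zero]
  exact (tendsto_pure_pure _ 0).comp (tendsto_iterate_floor_mul_intCast h1 h2 ⌊lam * x⌋)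

end FloorMul

/-- For -1 < λ < 0, the iterates of f_λ(x) = ⌊λx⌋ converge to 0 for every x. -/
theorem floor_lambda_iterates_tendsto_zero (lam : ℝ) (h1 : -1 < lam) (h2 : lam < 0) :
    ∀ x : ℝ, Tendsto (fun n : ℕ => (fun y : ℝ => (⌊lam * y⌋ : ℝ))^[n] x) atTop (nhds 0) :=
  fun x => (floor_lambda_iterates_tendsto_zero_general h1 h2.le x).mono_right (pure_le_nhds 0)
end

section
/- Let λ ∈ ℝ with λ < −1 and let x ∈ ℝ with x > 0. Then the even iterates diverge to +∞ and the odd iterates diverge to −∞: f_λ^{2k}(x) → +∞ and f_λ^{2k+1}(x) → −∞ as k → ∞. -/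
open Filter

/-! If `x > 0` then `a * x < -x ≤ -⌊x⌋`, so the integer `n = ⌊a * x⌋` satisfies `n ≤ -⌊x⌋ - 1`.
If `n ≤ 0` is an integer then `a * n ≥ -n`, and rounding down preserves this because `-n` is an
integer. Two steps therefore increase the integer part of a positive point by at least one. -/

section FloorMul

variable {R : Type*} [Ring R] [LinearOrder R] [FloorRing R]

lemma tendsto_atTop_of_tendsto_floor_atTop {ι : Type*} {l : Filter ι} {u : ι → R}
    (hu : Tendsto (fun i => ⌊u i⌋) l atTop) : Tendsto u l atTop :=
  tendsto_atTop.mpr fun b => (tendsto_atTop.mp hu ⌈b⌉).mono fun _ hi =>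
    (Int.le_ceil b).trans (Int.le_floor.mp hi)

/-- The map `f_a : x ↦ ⌊a * x⌋` whose orbits are studied. The integer value is cast back to `R` so
that the map can be iterated. -/
def floorMul (a : R) : R → R := fun x => (⌊a * x⌋ : R)

variable [IsStrictOrderedRing R] {a x : R}

lemma floor_mul_lt_neg_floor (ha : a < -1) (hx : 0 < x) : ⌊a * x⌋ < -⌊x⌋ := by
  rw [Int.floor_lt]
  calc
    a * x < -1 * x := mul_lt_mul_of_pos_right ha hx
    _ = -x := neg_one_mul x
    _ ≤ -(⌊x⌋ : R) := neg_le_neg (Int.floor_le x)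
    _ = ((-⌊x⌋ : ℤ) : R) := (Int.cast_neg _).symm

lemma neg_le_floor_mul_intCast (ha : a ≤ -1) {n : ℤ} (hn : n ≤ 0) : -n ≤ ⌊a * n⌋ := by
  rw [Int.le_floor]
  calc
    ((-n : ℤ) : R) = -1 * n := by rw [Int.cast_neg, neg_one_mul]
    _ ≤ a * n := mul_le_mul_of_nonpos_right ha (Int.cast_nonpos.mpr hn)

lemma floor_add_one_le_floor_floorMul_floorMul (ha : a < -1) (hx : 0 < x) :
    ⌊x⌋ + 1 ≤ ⌊floorMul a (floorMul a x)⌋ := by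
  have floor_nonneg : 0 ≤ ⌊x⌋ := Int.floor_nonneg.mpr hx.le
  have first_step : ⌊a * x⌋ < -⌊x⌋ := floor_mul_lt_neg_floor ha hx
  have second_step : -⌊a * x⌋ ≤ ⌊a * (⌊a * x⌋ : R)⌋ :=
    neg_le_floor_mul_intCast ha.le (by lia)
  simp only [floorMul, Int.floor_intCast]
  lia

lemma floor_add_natCast_le_floor_iterate_floorMul (ha : a < -1) (hx : 0 < x) (k : ℕ) :
    ⌊x⌋ + k ≤ ⌊(floorMul a)^[2 * k] x⌋ := by
  induction k generalizing x with
  | zero => simp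
  | succ k ih =>
    let y := floorMul a (floorMul a x)
    have growth : ⌊x⌋ + 1 ≤ ⌊y⌋ := floor_add_one_le_floor_floorMul_floorMul ha hx
    have floor_nonneg : 0 ≤ ⌊x⌋ := Int.floor_nonneg.mpr hx.le
    have one_le_y : 1 ≤ y := Int.floor_pos.mp (by lia)
    calc
      ⌊x⌋ + (k + 1 : ℕ) ≤ ⌊y⌋ + k := by lia
      _ ≤ ⌊(floorMul a)^[2 * k] y⌋ := ih (one_pos.trans_le one_le_y)
      _ = ⌊(floorMul a)^[2 * (k + 1)] x⌋ := rfl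

lemma tendsto_iterate_two_mul_floorMul_atTop (ha : a < -1) (hx : 0 < x) :
    Tendsto (fun k : ℕ => (floorMul a)^[2 * k] x) atTop atTop :=
  tendsto_atTop_of_tendsto_floor_atTop <|
    tendsto_atTop_mono (floor_add_natCast_le_floor_iterate_floorMul ha hx)
      (tendsto_atTop_add_const_left _ _ tendsto_natCast_atTop_atTop)

-- `R` may contain infinitesimals, so `Tendsto.atTop_mul_const_of_neg'`, which is about archimedean
-- rings, does not apply.
lemma tendsto_floorMul_atTop_atBot (ha : a ≤ -1) : Tendsto (floorMul a) atTop atBot := by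
  refine tendsto_atBot_mono' atTop ?_ tendsto_neg_atTop_atBot
  filter_upwards [eventually_ge_atTop 0] with y hy
  calc
    floorMul a y ≤ a * y := Int.floor_le (a * y)
    _ ≤ -1 * y := mul_le_mul_of_nonneg_right ha hy
    _ = -y := neg_one_mul y

theorem floor_lambda_lt_neg_one_pos_orbit_general (ha : a < -1) (hx : 0 < x) :
    Tendsto (fun k : ℕ => (floorMul a)^[2 * k] x) atTop atTop ∧
    Tendsto (fun k : ℕ => (floorMul a)^[2 * k + 1] x) atTop atBot := by
  have even := tendsto_iterate_two_mul_floorMul_atTop ha hx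
  refine ⟨even, ?_⟩
  simpa only [Function.iterate_succ_apply', Function.comp_def] using
    (tendsto_floorMul_atTop_atBot ha.le).comp even

end FloorMul

/-- For λ < -1 and x > 0, the even iterates of f_λ(x) = ⌊λx⌋ tend to +∞
and the odd iterates tend to -∞. -/
theorem floor_lambda_lt_neg_one_pos_orbit (lam : ℝ) (hlam : lam < -1)
    (x : ℝ) (hx : 0 < x) :
    Tendsto (fun k : ℕ => (fun y : ℝ => (⌊lam * y⌋ : ℝ))^[2 * k] x) atTop atTop ∧
    Tendsto (fun k : ℕ => (fun y : ℝ => (⌊lam * y⌋ : ℝ))^[2 * k + 1] x) atTop atBot :=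
  floor_lambda_lt_neg_one_pos_orbit_general hlam hx
end

section
/- Let m ∈ ℕ, m ≥ 1, and let λ ∈ ℝ satisfy (m−1)/m < λ ≤ m/(m+1). Then for every x ∈ ℝ with x < −m/λ, the iterates f_λⁿ(x) form an increasing sequence bounded above by −m, and f_λⁿ(x) → −m as n → ∞. -/
open Filter

/-!
On `(-∞, -m]` the monotone map `y ↦ ⌊λy⌋` has `-m` as its only fixed point: `⌊-λm⌋ = -m` because
`(m - 1)/m < λ ≤ 1`, and it moves every integer `z < -m` strictly upwards because `λ ≤ m/(m + 1)`.
The orbit of `x ≤ -m` therefore increases and stays below `-m`. After one step it lives in the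
discrete space `ℤ`, where every map is continuous, so it converges to a fixed point, necessarily
`-m`, and it reaches this limit in finitely many steps.
-/

theorem tendsto_iterate_of_isLeast_fixedPoints {α : Type*} [ConditionallyCompleteLattice α]
    [TopologicalSpace α] [SupConvergenceClass α] [T2Space α] {f : α → α} (hf : Monotone f)
    (hcont : Continuous f) {x p : α} (hx : x ≤ f x)
    (hp : IsLeast (Function.fixedPoints f ∩ Set.Ici x) p) :
    Tendsto (fun n : ℕ => f^[n] x) atTop (nhds p) := by
  obtain ⟨⟨hfix, hxp⟩, hleast⟩ := hp
  have hle (n : ℕ) : f^[n] x ≤ p := (hf.iterate n hxp).trans_eq (hfix.iterate n)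
  have hbdd : BddAbove (Set.range fun n : ℕ => f^[n] x) := ⟨p, Set.forall_mem_range.2 hle⟩
  have hlim : Tendsto (fun n : ℕ => f^[n] x) atTop (nhds (⨆ n : ℕ, f^[n] x)) :=
    tendsto_atTop_ciSup (hf.monotone_iterate_of_le_map hx) hbdd
  have hsup : ⨆ n : ℕ, f^[n] x = p :=
    (ciSup_le hle).antisymm <|
      hleast ⟨isFixedPt_of_tendsto_iterate hlim hcont.continuousAt, le_ciSup hbdd 0⟩
  rwa [hsup] at hlim

theorem iterate_succ_intCast_map {R : Type*} [IntCast R] (F : R → ℤ) (x : R) (n : ℕ) :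
    (fun y : R => (F y : R))^[n + 1] x = ((fun z : ℤ => F z)^[n] (F x) : ℤ) := by
  have hsemi : Function.Semiconj (Int.cast : ℤ → R) (fun z : ℤ => F z) (fun y : R => (F y : R)) :=
    fun _ => rfl
  exact (hsemi.iterate_right n (F x)).symm

section IntegerValued

variable {R : Type*} [Ring R] [LinearOrder R] [IsStrictOrderedRing R] {F : R → ℤ} {p : ℤ} {x : R}

theorem le_intCast_map_of_forall_lt_map (hF : Monotone F) (hlt : ∀ z < p, z < F z) (hx : x ≤ p) :
    x ≤ F x := by
  by_contra! hFx
  have hFp : F x < p := Int.cast_lt.1 (hFx.trans_le hx)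
  exact (hlt (F x) hFp).not_ge (hF hFx.le)

theorem eventually_iterate_intCast_map_eq (hF : Monotone F) (hp : F p = p)
    (hlt : ∀ z < p, z < F z) (hx : x ≤ p) :
    ∀ᶠ n : ℕ in atTop, (fun y : R => (F y : R))^[n] x = p := by
  have hFx : F x ≤ p := (hF hx).trans_eq hp
  have hleast : IsLeast (Function.fixedPoints (fun z : ℤ => F z) ∩ Set.Ici (F x)) p :=
    ⟨⟨hp, hFx⟩, fun z hz => le_of_not_gt fun hzp => (hlt z hzp).ne' hz.1⟩
  have hlim : Tendsto (fun n : ℕ => (fun z : ℤ => F z)^[n] (F x)) atTop (nhds p) :=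
    tendsto_iterate_of_isLeast_fixedPoints (hF.comp Int.cast_mono) continuous_of_discreteTopology
      (hF (le_intCast_map_of_forall_lt_map hF hlt hx)) hleast
  rw [nhds_discrete, tendsto_pure] at hlim
  rw [← map_add_atTop_eq_nat 1, eventually_map]
  filter_upwards [hlim] with n hn
  rw [iterate_succ_intCast_map, hn]

end IntegerValued

section FloorMul

variable {K : Type*} [Field K] [LinearOrder K] [IsStrictOrderedRing K] {a : K} {m : ℕ}

theorem pos_of_sub_one_div_lt (hm : 1 ≤ m) (ha : ((m : K) - 1) / m < a) : 0 < a :=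
  (div_nonneg (sub_nonneg.2 (Nat.one_le_cast.2 hm)) m.cast_nonneg).trans_lt ha

theorem le_one_of_le_div_add_one (ha : a ≤ (m : K) / (m + 1)) : a ≤ 1 :=
  ha.trans (div_le_one_of_le₀ (le_add_of_nonneg_right zero_le_one) (by positivity))

theorem neg_natCast_div_le_neg_natCast (hm : 1 ≤ m) (h1 : ((m : K) - 1) / m < a)
    (h2 : a ≤ (m : K) / (m + 1)) : -(m : K) / a ≤ -m :=
  (neg_div _ _).trans_le <| neg_le_neg <|
    le_div_self m.cast_nonneg (pos_of_sub_one_div_lt hm h1) (le_one_of_le_div_add_one h2)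

variable [FloorRing K]

theorem floor_mul_neg_natCast_eq (hm : 1 ≤ m) (hlt : ((m : K) - 1) / m < a) (ha : a ≤ 1) :
    ⌊a * -(m : K)⌋ = -(m : ℤ) := by
  have hm0 : (0 : K) < m := by exact_mod_cast hm
  rw [div_lt_iff₀ hm0] at hlt
  have ham : a * m ≤ m := mul_le_of_le_one_left hm0.le ha
  rw [Int.floor_eq_iff]
  push_cast
  constructor <;> linarith

theorem lt_floor_mul_intCast_of_lt_neg (ha : a ≤ (m : K) / (m + 1)) {z : ℤ} (hz : z < -(m : ℤ)) :
    z < ⌊a * (z : K)⌋ := by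
  have hm : (0 : K) < m + 1 := by positivity
  have hz' : (m : K) + 1 ≤ -z := by exact_mod_cast (by lia : (m : ℤ) + 1 ≤ -z)
  have hgap : 1 / ((m : K) + 1) ≤ 1 - a := by
    have hcompl : 1 - (m : K) / (m + 1) = 1 / (m + 1) := by field_simp; ring
    linarith
  have hmove : 1 ≤ (1 - a) * -z :=
    calc (1 : K) = 1 / (m + 1) * (m + 1) := (one_div_mul_cancel hm.ne').symm
      _ ≤ (1 - a) * -z := by gcongr; exact (one_div_pos.2 hm).le.trans hgap
  rw [← Int.add_one_le_iff, Int.le_floor]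
  push_cast
  linarith

theorem floor_lambda_lt_one_orbit_tendsto_neg_m_general (hm : 1 ≤ m)
    (h1 : ((m : K) - 1) / m < a) (h2 : a ≤ (m : K) / (m + 1)) {x : K} (hx : x ≤ -(m : K)) :
    Monotone (fun n : ℕ => (fun y : K => (⌊a * y⌋ : K))^[n] x) ∧
    (∀ n : ℕ, (fun y : K => (⌊a * y⌋ : K))^[n] x ≤ -(m : K)) ∧
    ∀ᶠ n : ℕ in atTop, (fun y : K => (⌊a * y⌋ : K))^[n] x = -(m : K) := by
  have hF : Monotone fun y : K => ⌊a * y⌋ :=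
    Int.floor_mono.comp (monotone_id.const_mul (pos_of_sub_one_div_lt hm h1).le)
  have hf : Monotone fun y : K => (⌊a * y⌋ : K) := Int.cast_mono.comp hF
  have hfix : ⌊a * -(m : K)⌋ = -(m : ℤ) :=
    floor_mul_neg_natCast_eq hm h1 (le_one_of_le_div_add_one h2)
  have hfix' : Function.IsFixedPt (fun y : K => (⌊a * y⌋ : K)) (-(m : K)) := by
    simp only [Function.IsFixedPt, hfix, Int.cast_neg, Int.cast_natCast]
  have hlt : ∀ z < -(m : ℤ), z < ⌊a * (z : K)⌋ := fun _ => lt_floor_mul_intCast_of_lt_neg h2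
  have hx' : x ≤ ((-(m : ℤ) : ℤ) : K) := by exact_mod_cast hx
  refine ⟨hf.monotone_iterate_of_le_map (le_intCast_map_of_forall_lt_map hF hlt hx'),
    fun n => (hf.iterate n hx).trans_eq (hfix'.iterate n), ?_⟩
  simpa only [Int.cast_neg, Int.cast_natCast] using
    eventually_iterate_intCast_map_eq hF (by simpa only [Int.cast_neg, Int.cast_natCast]) hlt hx'

end FloorMul

/-- For (m-1)/m < λ ≤ m/(m+1) and x < -m/λ, the iterates of f_λ(x) = ⌊λx⌋ form an
increasing sequence bounded above by -m, converging to -m. -/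
theorem floor_lambda_lt_one_orbit_tendsto_neg_m (m : ℕ) (hm : 1 ≤ m) (lam : ℝ)
    (h1 : ((m : ℝ) - 1) / m < lam) (h2 : lam ≤ (m : ℝ) / (m + 1))
    (x : ℝ) (hx : x < -(m : ℝ) / lam) :
    Monotone (fun n : ℕ => (fun y : ℝ => (⌊lam * y⌋ : ℝ))^[n] x) ∧
    (∀ n : ℕ, (fun y : ℝ => (⌊lam * y⌋ : ℝ))^[n] x ≤ -(m : ℝ)) ∧
    Tendsto (fun n : ℕ => (fun y : ℝ => (⌊lam * y⌋ : ℝ))^[n] x) atTop (nhds (-(m : ℝ))) := by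
  have hx' := hx.le.trans (neg_natCast_div_le_neg_natCast hm h1 h2)
  exact (floor_lambda_lt_one_orbit_tendsto_neg_m_general hm h1 h2 hx').imp_right
    (And.imp_right EventuallyEq.tendsto)
end

section
/- Let m ∈ ℕ, m ≥ 1, and let λ ∈ ℝ satisfy (m+1)/m ≤ λ and λ·(m−1) < m (the latter condition being automatic when m = 1 and equivalent to λ < m/(m−1) when m ≥ 2). Let k be an integer with 0 ≤ k ≤ m−1 and let x ∈ ℝ with k/λ ≤ x < (k+1)/λ. Then f_λ(x) = k and f_λⁿ(x) = k for all n ≥ 1; in particular f_λⁿ(x) → k as n → ∞. -/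
open Filter

/-!
For `0 < lam`, the interval `[k / lam, (k + 1) / lam)` is the fibre of `y ↦ ⌊lam * y⌋` over `k`, so
its points reach `k` in one step and stay there as soon as `k` is a fixed point. For `1 ≤ lam` the
defect `lam * a - a = (lam - 1) * a` increases with `a`; being less than `1` at `a = m - 1`, it lies
in `[0, 1)` at every integer `k` from `0` to `m - 1`, which makes each such `k` a fixed point.
-/

theorem iterate_eq_of_isFixedPt_of_apply_eq {α : Type*} {f : α → α} {x a : α}
    (ha : Function.IsFixedPt f a) (hx : f x = a) {n : ℕ} (hn : 1 ≤ n) : f^[n] x = a := by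
  obtain ⟨j, rfl⟩ := Nat.exists_eq_add_of_le' hn
  rw [Function.iterate_succ_apply, hx]
  exact ha.iterate j

section OrderedRing

variable {R : Type*} [Ring R] [LinearOrder R] [IsStrictOrderedRing R]

theorem mul_lt_add_one_of_le {lam a b : R} (hlam : 1 ≤ lam) (hab : a ≤ b)
    (hb : lam * b < b + 1) : lam * a < a + 1 := by
  have defect_le : (lam - 1) * a ≤ (lam - 1) * b :=
    mul_le_mul_of_nonneg_left hab (sub_nonneg.2 hlam)
  have defect_lt : (lam - 1) * b < 1 := by
    rwa [sub_one_mul, sub_lt_iff_lt_add']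
  rw [← sub_lt_iff_lt_add', ← sub_one_mul]
  exact defect_le.trans_lt defect_lt

theorem floor_mul_intCast_eq_self [FloorRing R] {lam : R} {k : ℤ} (hlam : 1 ≤ lam) (hk : 0 ≤ k)
    (hlt : lam * k < k + 1) : ⌊lam * k⌋ = k :=
  Int.floor_eq_iff.2 ⟨le_mul_of_one_le_left (Int.cast_nonneg hk) hlam, hlt⟩

end OrderedRing

section OrderedField

variable {K : Type*} [Field K] [LinearOrder K] [IsStrictOrderedRing K] [FloorRing K]

theorem floor_mul_eq_iff {lam x : K} {k : ℤ} (hlam : 0 < lam) :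
    ⌊lam * x⌋ = k ↔ k / lam ≤ x ∧ x < (k + 1) / lam := by
  rw [Int.floor_eq_iff, div_le_iff₀' hlam, lt_div_iff₀' hlam]

theorem floor_lambda_gt_one_basin_of_fixed_point_general [TopologicalSpace K] {lam x : K} {k : ℤ}
    (hlam : 0 < lam) (hfix : ⌊lam * k⌋ = k) (hx1 : k / lam ≤ x) (hx2 : x < (k + 1) / lam) :
    ⌊lam * x⌋ = k ∧
    (∀ n : ℕ, 1 ≤ n → (fun y : K => (⌊lam * y⌋ : K))^[n] x = k) ∧
    Tendsto (fun n : ℕ => (fun y : K => (⌊lam * y⌋ : K))^[n] x) atTop (nhds (k : K)) := by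
  have floor_eq : ⌊lam * x⌋ = k := (floor_mul_eq_iff hlam).2 ⟨hx1, hx2⟩
  have isFixedPt : Function.IsFixedPt (fun y : K => (⌊lam * y⌋ : K)) k := congrArg Int.cast hfix
  have iterate_eq (n : ℕ) (hn : 1 ≤ n) : (fun y : K => (⌊lam * y⌋ : K))^[n] x = k :=
    iterate_eq_of_isFixedPt_of_apply_eq isFixedPt (congrArg Int.cast floor_eq) hn
  exact ⟨floor_eq, iterate_eq, tendsto_atTop_of_eventually_const iterate_eq⟩

end OrderedField

/-- For (m+1)/m ≤ λ with λ(m-1) < m, k an integer with 0 ≤ k ≤ m-1, and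
k/λ ≤ x < (k+1)/λ, one has f_λ(x) = k, all iterates equal k, so the orbit
converges to k. -/
theorem floor_lambda_gt_one_basin_of_fixed_point (m : ℕ) (hm : 1 ≤ m) (lam : ℝ)
    (h1 : ((m : ℝ) + 1) / m ≤ lam) (h2 : lam * ((m : ℝ) - 1) < m)
    (k : ℤ) (hk1 : 0 ≤ k) (hk2 : k ≤ (m : ℤ) - 1)
    (x : ℝ) (hx1 : (k : ℝ) / lam ≤ x) (hx2 : x < ((k : ℝ) + 1) / lam) :
    ⌊lam * x⌋ = k ∧
    (∀ n : ℕ, 1 ≤ n → (fun y : ℝ => (⌊lam * y⌋ : ℝ))^[n] x = (k : ℝ)) ∧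
    Tendsto (fun n : ℕ => (fun y : ℝ => (⌊lam * y⌋ : ℝ))^[n] x) atTop (nhds (k : ℝ)) := by
  have one_lt_lam : 1 < lam :=
    ((one_lt_div (Nat.cast_pos.2 hm)).2 (lt_add_one (m : ℝ))).trans_le h1
  have k_le : (k : ℝ) ≤ m - 1 := by exact_mod_cast hk2
  have lam_mul_k_lt : lam * k < k + 1 :=
    mul_lt_add_one_of_le one_lt_lam.le k_le (by rwa [sub_add_cancel])
  exact floor_lambda_gt_one_basin_of_fixed_point_general (zero_lt_one.trans one_lt_lam)
    (floor_mul_intCast_eq_self one_lt_lam.le hk1 lam_mul_k_lt) hx1 hx2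
end

section
/- Let m ∈ ℕ, m ≥ 1, and let λ ∈ ℝ satisfy (m+1)/m ≤ λ and λ·(m−1) < m (the latter condition being automatic when m = 1 and equivalent to λ < m/(m−1) when m ≥ 2). Then for every x ∈ ℝ with x ≥ m/λ, the iterates diverge: f_λⁿ(x) → +∞ as n → ∞. -/
open Filter

/-!
The map `y ↦ ⌊a * y⌋` is monotone for `0 ≤ a`, so its orbits stay above any sequence that grows
no faster than the map does. If `m + 1 ≤ a * m` with `1 ≤ a`, then `k + 1 ≤ ⌊a * k⌋` for every
integer `k ≥ m`, so `m, m + 1, m + 2, …` is such a sequence. The condition `m / a ≤ x` says exactly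
that the orbit of `x` is above `m` after one step.
-/

section Ring

variable {R : Type*} [Ring R] [LinearOrder R] [IsStrictOrderedRing R]

theorem tendsto_iterate_atTop_of_add_one_le [Archimedean R] {f : R → R} (hf : Monotone f) {c x : R}
    (hstep : ∀ n : ℕ, c + n + 1 ≤ f (c + n)) (hx : c ≤ x) :
    Tendsto (fun n : ℕ => f^[n] x) atTop atTop := by
  have orbit_ge (n : ℕ) : c + n ≤ f^[n] x := by
    refine hf.seq_le_seq (x := fun n : ℕ => c + n) (y := fun n => f^[n] x) n ?_ ?_ ?_
    · simpa using hx
    · intro k _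
      simpa [add_assoc] using hstep k
    · intro k _
      exact (Function.iterate_succ_apply' f k x).ge
  exact tendsto_atTop_mono orbit_ge (tendsto_atTop_add_const_left _ c tendsto_natCast_atTop_atTop)

theorem add_one_le_mul_of_le {a b c : R} (ha : 1 ≤ a) (hb : b + 1 ≤ a * b) (hbc : b ≤ c) :
    c + 1 ≤ a * c :=
  calc
    c + 1 = (b + 1) + 1 * (c - b) := by noncomm_ring
    _ ≤ a * b + a * (c - b) :=
      add_le_add hb (mul_le_mul_of_nonneg_right ha (sub_nonneg.mpr hbc))
    _ = a * c := by noncomm_ring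

variable [FloorRing R]

theorem monotone_floor_mul {a : R} (ha : 0 ≤ a) : Monotone fun y : R => (⌊a * y⌋ : R) :=
  Int.cast_mono.comp (Int.floor_mono.comp (monotone_mul_left_of_nonneg ha))

theorem intCast_le_floor {k : ℤ} {y : R} (h : (k : R) ≤ y) : (k : R) ≤ ⌊y⌋ :=
  Int.cast_mono (Int.le_floor.mpr h)

end Ring

section Field

variable {K : Type*} [Field K] [LinearOrder K] [IsStrictOrderedRing K] [FloorRing K]

theorem tendsto_iterate_floor_mul_atTop {a : K} {k : ℤ} (ha : 1 ≤ a) (hk : (k : K) + 1 ≤ a * k)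
    {x : K} (hx : (k : K) ≤ x) :
    Tendsto (fun n : ℕ => (fun y : K => (⌊a * y⌋ : K))^[n] x) atTop atTop := by
  refine tendsto_iterate_atTop_of_add_one_le (monotone_floor_mul (zero_le_one.trans ha))
    (fun n => ?_) hx
  have hn : (k : K) + n + 1 ≤ a * (k + n) :=
    add_one_le_mul_of_le ha hk (le_add_of_nonneg_right n.cast_nonneg)
  have hfloor : ((k + n + 1 : ℤ) : K) ≤ ⌊a * (k + n)⌋ := intCast_le_floor (by exact_mod_cast hn)
  exact_mod_cast hfloor

theorem floor_lambda_gt_one_orbit_tendsto_top_general (m : ℕ) (hm : 1 ≤ m) (lam : K)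
    (h1 : ((m : K) + 1) / m ≤ lam) (x : K) (hx : (m : K) / lam ≤ x) :
    Tendsto (fun n : ℕ => (fun y : K => (⌊lam * y⌋ : K))^[n] x) atTop atTop := by
  have hm_pos : (0 : K) < m := by exact_mod_cast hm
  have hlam : 1 ≤ lam := ((one_le_div hm_pos).mpr (le_add_of_nonneg_right zero_le_one)).trans h1
  have hstep : (m : K) + 1 ≤ lam * m := (div_le_iff₀ hm_pos).mp h1
  have hfirst : (m : K) ≤ lam * x := (div_le_iff₀' (zero_lt_one.trans_le hlam)).mp hx
  rw [← tendsto_add_atTop_iff_nat 1]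
  exact tendsto_iterate_floor_mul_atTop (k := m) hlam (by exact_mod_cast hstep)
    (intCast_le_floor (by exact_mod_cast hfirst))

end Field

/-- For (m+1)/m ≤ λ with λ(m-1) < m, and x ≥ m/λ, the iterates of
f_λ(x) = ⌊λx⌋ tend to +∞. -/
theorem floor_lambda_gt_one_orbit_tendsto_top (m : ℕ) (hm : 1 ≤ m) (lam : ℝ)
    (h1 : ((m : ℝ) + 1) / m ≤ lam) (h2 : lam * ((m : ℝ) - 1) < m)
    (x : ℝ) (hx : (m : ℝ) / lam ≤ x) :
    Tendsto (fun n : ℕ => (fun y : ℝ => (⌊lam * y⌋ : ℝ))^[n] x) atTop atTop :=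
  floor_lambda_gt_one_orbit_tendsto_top_general m hm lam h1 x hx
end
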